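/- The map φ_n : Y_n → Q_n is a surjective morphism of posets, and the partial order it induces on Q_n coincides with the componentwise order: for ε, η ∈ Q_n, ε ≤ η componentwise if and only if there exist trees t, w ∈ Y_n with φ_n(t) = ε, φ_n(w) = η and t ≤ w in the weak order on Y_n. -/

import Mathlib

/-- Planar binary trees: `leaf` is the tree `|` (no interior vertex) and
`node l r = l ∨ r` is the grafting of `l` and `r` (their roots are joined to a new
vertex, which becomes the root). -/
inductive PBTree : Type
  | leaf : PBTree
  | node : PBTree → PBTree → PBTree
deriving DecidableEq

/-- The number of interior vertices of a planar binary tree: `t ∈ Yₙ` iff `t.size = n`. -/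
def PBTree.size : PBTree → ℕ
  | .leaf => 0
  | .node l r => l.size + r.size + 1

/-- The weak order on planar binary trees, generated transitively by
(a) `u ≤ u' → v ≤ v' → u∨v ≤ u'∨v'` and (b) `(u∨v)∨w ≤ u∨(v∨w)`. -/
inductive TreeLe : PBTree → PBTree → Prop
  | refl (t : PBTree) : TreeLe t t
  | graft {u u' v v' : PBTree} : TreeLe u u' → TreeLe v v' →
      TreeLe (.node u v) (.node u' v')
  | rotate (u v w : PBTree) : TreeLe (.node (.node u v) w) (.node u (.node v w))
  | trans {a b c : PBTree} : TreeLe a b → TreeLe b c → TreeLe a c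

/-- `phi t` is `φₙ(t) = (ε₁, …, ε_{n-1}) ∈ Qₙ = {±1}^{n-1}` for `t ∈ Yₙ`: the orientations
of the `n-1` interior leaves of `t` (all leaves except the two extreme ones), where
`εᵢ = -1` if the `i`-th interior leaf is right-oriented (SW–NE, a right child) and
`εᵢ = +1` if it is left-oriented (SE–NW, a left child).  Elements of `Qₙ` are modelled
as lists of integers of length `n-1` with entries `±1`. -/
def phi : PBTree → List ℤ
  | .leaf => []
  | .node .leaf .leaf => []
  | .node .leaf (.node c d) => 1 :: phi (.node c d)
  | .node (.node a b) .leaf => phi (.node a b) ++ [-1]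
  | .node (.node a b) (.node c d) => phi (.node a b) ++ ([-1, 1] ++ phi (.node c d))

/-!
Record the orientations of *all* leaves of a tree, the two extreme ones included. A rotation
`(u ∨ v) ∨ w ≤ u ∨ (v ∨ w)` turns `v` from a right child into a left child, so it changes this list
only when `v` is a leaf, and then it raises one entry from `-1` to `+1`. Hence `phi` is monotone.

Conversely `phi` has a monotone section, built one sign at a time from the right: `+1` is prepended
to `phi t` by passing to `| ∨ t`, and `-1` by grafting a cherry onto the leftmost leaf of `t`. Both
operations are monotone, and rotating up along the left branch shows that the second tree lies
below the first.
-/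

theorem forall₂_trans {α : Type*} {R : α → α → Prop} [IsTrans α R] {k l m : List α}
    (hkl : List.Forall₂ R k l) (hlm : List.Forall₂ R l m) : List.Forall₂ R k m := by
  induction hkl generalizing m with
  | nil => exact hlm
  | cons hab _ ih =>
    cases hlm with
    | cons hbc hlm => exact .cons (_root_.trans hab hbc) (ih hlm)

theorem forall₂_dropLast {α β : Type*} {R : α → β → Prop} {l : List α} {m : List β}
    (h : List.Forall₂ R l m) : List.Forall₂ R l.dropLast m.dropLast := by
  rw [List.dropLast_eq_take, List.dropLast_eq_take, h.length_eq]
  exact List.forall₂_take _ h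

namespace PBTree

/-- The orientations of all leaves of a tree from left to right, extreme leaves included. The
second argument is the orientation of the edge below the root; it matters only for `leaf`, whose
single leaf is that edge. -/
def leafSigns : PBTree → ℤ → List ℤ
  | leaf, e => [e]
  | node l r, _ => l.leafSigns 1 ++ r.leafSigns (-1)

theorem leafSigns_eq_cons_phi_append {t : PBTree} (ht : t ≠ leaf) (e : ℤ) :
    t.leafSigns e = 1 :: (phi t ++ [-1]) := by
  induction t generalizing e with
  | leaf => contradiction
  | node l r ihl ihr => cases l <;> cases r <;> simp_all [leafSigns, phi]

theorem phi_eq_dropLast_tail_leafSigns (t : PBTree) (e : ℤ) :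
    phi t = (t.leafSigns e).tail.dropLast := by
  cases t with
  | leaf => rfl
  | node l r => simp [leafSigns_eq_cons_phi_append]

theorem forall₂_le_leafSigns (t : PBTree) {d e : ℤ} (hde : d ≤ e) :
    List.Forall₂ (· ≤ ·) (t.leafSigns d) (t.leafSigns e) := by
  cases t with
  | leaf => exact .cons hde .nil
  | node l r => exact List.forall₂_refl _

theorem _root_.TreeLe.forall₂_le_leafSigns {t w : PBTree} (h : TreeLe t w) (e : ℤ) :
    List.Forall₂ (· ≤ ·) (t.leafSigns e) (w.leafSigns e) := by
  induction h generalizing e with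
  | refl t => exact List.forall₂_refl _
  | graft _ _ ihu ihv => exact List.rel_append (ihu 1) (ihv (-1))
  | rotate u v w =>
    simp only [leafSigns, List.append_assoc]
    exact List.rel_append (List.forall₂_refl _)
      (List.rel_append (v.forall₂_le_leafSigns (by norm_num)) (List.forall₂_refl _))
  | trans _ _ ihab ihbc => exact forall₂_trans (ihab e) (ihbc e)

theorem _root_.TreeLe.forall₂_le_phi {t w : PBTree} (h : TreeLe t w) :
    List.Forall₂ (· ≤ ·) (phi t) (phi w) := by
  rw [phi_eq_dropLast_tail_leafSigns t 1, phi_eq_dropLast_tail_leafSigns w 1,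
    ← List.drop_one, ← List.drop_one]
  exact forall₂_dropLast (List.forall₂_drop 1 (h.forall₂_le_leafSigns 1))

/-- The tree `s / t` obtained by grafting the root of `s` onto the leftmost leaf of `t`. -/
def graftLeft (s : PBTree) : PBTree → PBTree
  | leaf => s
  | node l r => node (s.graftLeft l) r

theorem size_graftLeft (s t : PBTree) : (s.graftLeft t).size = s.size + t.size := by
  induction t with
  | leaf => rfl
  | node l r ihl _ => simp only [graftLeft, size, ihl, Nat.add_assoc]

theorem phi_graftLeft {s t : PBTree} (hs : s ≠ leaf) (ht : t ≠ leaf) :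
    phi (s.graftLeft t) = phi s ++ -1 :: phi t := by
  obtain _ | ⟨a, b⟩ := s
  · contradiction
  induction t with
  | leaf => contradiction
  | node l r ihl _ => cases l <;> cases r <;> simp_all [graftLeft, phi]

theorem _root_.TreeLe.graftLeft {t w : PBTree} (h : TreeLe t w) (s : PBTree) :
    TreeLe (s.graftLeft t) (s.graftLeft w) := by
  induction h with
  | refl t => exact .refl _
  | graft _ hv ihu _ => exact .graft ihu hv
  | rotate u v w => exact .rotate _ _ _
  | trans _ _ ihab ihbc => exact .trans ihab ihbc

theorem graftLeft_node_leaf_treeLe_node (s t : PBTree) :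
    TreeLe ((node s leaf).graftLeft t) (node s t) := by
  induction t with
  | leaf => exact .refl _
  | node l r ihl _ => exact .trans (.graft ihl (.refl r)) (.rotate s l r)

theorem phi_node_leaf_left {t : PBTree} (ht : t ≠ leaf) : phi (node leaf t) = 1 :: phi t := by
  cases t with
  | leaf => contradiction
  | node l r => rfl

/-- A monotone section of `phi` on lists of signs. Every positive entry is read as `+1` and every
other entry as `-1`, so that monotonicity holds for arbitrary lists of integers. -/
def ofSigns : List ℤ → PBTree
  | [] => node leaf leaf
  | x :: xs => if 0 < x then node leaf (ofSigns xs) else (node leaf leaf).graftLeft (ofSigns xs)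

theorem size_ofSigns (ε : List ℤ) : (ofSigns ε).size = ε.length + 1 := by
  induction ε with
  | nil => rfl
  | cons x xs ih =>
    rw [ofSigns]
    split_ifs <;> simp only [size, size_graftLeft, ih, List.length_cons] <;> omega

theorem ofSigns_ne_leaf (ε : List ℤ) : ofSigns ε ≠ leaf := by
  intro h
  simpa [h, size] using size_ofSigns ε

theorem phi_ofSigns {ε : List ℤ} (hε : ∀ x ∈ ε, x = -1 ∨ x = 1) : phi (ofSigns ε) = ε := by
  induction ε with
  | nil => rfl
  | cons x xs ih =>
    obtain ⟨hx, hxs⟩ := List.forall_mem_cons.mp hε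
    obtain rfl | rfl := hx
    · simp [ofSigns, phi_graftLeft, ofSigns_ne_leaf, ih hxs, phi]
    · simp [ofSigns, phi_node_leaf_left, ofSigns_ne_leaf, ih hxs]

theorem ofSigns_treeLe_ofSigns {ε η : List ℤ} (h : List.Forall₂ (· ≤ ·) ε η) :
    TreeLe (ofSigns ε) (ofSigns η) := by
  induction h with
  | nil => exact .refl _
  | cons hxy _ ih =>
    simp only [ofSigns]
    split_ifs with hx hy
    · exact .graft (.refl _) ih
    · exact absurd (hx.trans_le hxy) hy
    · exact (ih.graftLeft _).trans (graftLeft_node_leaf_treeLe_node _ _)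
    · exact ih.graftLeft _

end PBTree

/-- Corollaries 3.6, 3.8 and Proposition 3.7: `φₙ : Yₙ → Qₙ` is a
surjective morphism of posets, and the partial order it induces on `Qₙ` coincides with
the componentwise order (with `-1 < +1`): for `ε, η ∈ Qₙ`, `ε ≤ η` componentwise iff
there are trees `t, w ∈ Yₙ` with `φₙ(t) = ε`, `φₙ(w) = η` and `t ≤ w` in the weak order
on `Yₙ`. -/
theorem stmt18 (n : ℕ) (hn : 2 ≤ n) :
    (∀ ε : List ℤ, ε.length = n - 1 → (∀ x ∈ ε, x = -1 ∨ x = 1) →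
      ∃ t : PBTree, t.size = n ∧ phi t = ε) ∧
    (∀ t w : PBTree, t.size = n → w.size = n → TreeLe t w →
      ∀ (i : ℕ) (hi : i < (phi t).length) (hi' : i < (phi w).length),
        (phi t)[i] ≤ (phi w)[i]) ∧
    (∀ ε η : List ℤ, ε.length = n - 1 → η.length = n - 1 →
      (∀ x ∈ ε, x = -1 ∨ x = 1) → (∀ x ∈ η, x = -1 ∨ x = 1) →
      ((∀ (i : ℕ) (hi : i < ε.length) (hi' : i < η.length), ε[i] ≤ η[i]) ↔
        (∃ t w : PBTree, t.size = n ∧ w.size = n ∧ phi t = ε ∧ phi w = η ∧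
          TreeLe t w))) := by
  have size_section {ε : List ℤ} (hlen : ε.length = n - 1) : (PBTree.ofSigns ε).size = n := by
    rw [PBTree.size_ofSigns]
    omega
  refine ⟨fun ε hlen hε => ⟨.ofSigns ε, size_section hlen, PBTree.phi_ofSigns hε⟩,
    fun t w _ _ htw _ hi hi' => htw.forall₂_le_phi.get hi hi',
    fun ε η hεlen hηlen hε hη => ⟨fun hle => ?_, ?_⟩⟩
  · have hle₂ : List.Forall₂ (· ≤ ·) ε η :=
      List.forall₂_iff_get.mpr ⟨hεlen.trans hηlen.symm, hle⟩
    exact ⟨.ofSigns ε, .ofSigns η, size_section hεlen, size_section hηlen,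
      PBTree.phi_ofSigns hε, PBTree.phi_ofSigns hη, PBTree.ofSigns_treeLe_ofSigns hle₂⟩
  · rintro ⟨t, w, -, -, rfl, rfl, htw⟩ _ hi hi'
    exact htw.forall₂_le_phi.get hi hi'
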